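/- Let N ≥ 2, let R be a unitary ring in which every R-module has finite projective dimension, and let P be an N-differential R-module (an R-module with an R-linear endomorphism d satisfying d^N = 0) that is projective as an R-module. If {}_sH(P) = ker(d^s)/im(d^{N−s}) = 0 for all 1 ≤ s ≤ N−1, then P is contractible: P is isomorphic, as an N-differential module, to a direct sum C ⊕ C ⊕ ⋯ ⊕ C of N identical summands with differential sending the i-th summand identically onto the (i+1)-st for 1 ≤ i ≤ N−1 and the N-th summand to zero. -/

import Mathlib

/-! Statement 19: Let `N ≥ 2` and let `R` be a ring in which every module has finite projective
dimension.  If `P` is an `N`-differential `R`-module (`d ^ N = 0`) that is projective over `R`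
and has `ₛH(P) = ker d^s / im d^{N-s} = 0` for all `1 ≤ s ≤ N-1`, then `P` is contractible:
there is a submodule `S ≤ P` such that `(v_0,…,v_{N-1}) ↦ Σ_i d^i v_i` is a bijection
`S^N ≃ P` — i.e. `P ≅ S ⊕ dS ⊕ ⋯ ⊕ d^{N-1}S` with `d` shifting the summands and killing the
last one. -/

/-- `M` has finite projective dimension over `R`: there is a finite resolution
`0 → P_len → ⋯ → P_1 → P_0 → M → 0` by projective modules (realized, without loss of
generality, as submodules of free modules). -/
def HasFinProjDim (R : Type) [Ring R] (M : Type) [AddCommGroup M] [Module R M] : Prop :=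
  ∃ (len : ℕ) (ι : ℕ → Type) (P : ∀ i, Submodule R (ι i →₀ R))
    (f : ∀ i, ↥(P (i + 1)) →ₗ[R] ↥(P i)) (g : ↥(P 0) →ₗ[R] M),
    (∀ i, Module.Projective R ↥(P i)) ∧
    (∀ i, len < i → P i = ⊥) ∧
    Function.Surjective g ∧
    LinearMap.ker g = LinearMap.range (f 0) ∧
    (∀ i, LinearMap.ker (f i) = LinearMap.range (f (i + 1)))


open CategoryTheory in
theorem pd_aux_step {R A M : Type} [Ring R] [AddCommGroup A] [Module R A] [AddCommGroup M]
    [Module R M] (hA : Module.Projective R A) (f : A →ₗ[R] M) (n : ℕ) :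
    HasProjectiveDimensionLT (ModuleCat.of R (LinearMap.range f)) (n + 2) ↔
      HasProjectiveDimensionLT (ModuleCat.of R (LinearMap.ker f)) (n + 1) := by
  have h := LinearMap.shortExact_shortComplexKer f.surjective_rangeRestrict
  have := h.hasProjectiveDimensionLT_X₃_iff n
    ((IsProjective.iff_projective (R := R) A).mp hA)
  rw [← LinearMap.ker_rangeRestrict f]
  exact this

open CategoryTheory in
theorem pd_aux_res {R M : Type} [Ring R] [AddCommGroup M] [Module R M]
    (len : ℕ) (P : ℕ → Type) [∀ i, AddCommGroup (P i)] [∀ i, Module R (P i)]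
    (f : ∀ i, P (i + 1) →ₗ[R] P i) (g : P 0 →ₗ[R] M)
    (hP : ∀ i, Module.Projective R (P i)) (hb : ∀ i, len < i → Subsingleton (P i))
    (hg : Function.Surjective g) (h0 : LinearMap.ker g = LinearMap.range (f 0))
    (hf : ∀ i, LinearMap.ker (f i) = LinearMap.range (f (i + 1))) :
    ∃ n, HasProjectiveDimensionLT (ModuleCat.of R M) (n + 1) := by
  have key : ∀ k i, len ≤ i + k →
      HasProjectiveDimensionLT (ModuleCat.of R (LinearMap.range (f i))) (k + 1) := by
    intro k
    induction k with
    | zero =>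
      intro i hi
      have hsub : Subsingleton (P (i + 1)) := hb (i + 1) (by omega)
      have : Subsingleton (LinearMap.range (f i)) :=
        (f i).surjective_rangeRestrict.subsingleton
      rw [zero_add, ← projective_iff_hasProjectiveDimensionLT_one,
        ← IsProjective.iff_projective]
      infer_instance
    | succ k ih =>
      intro i hi
      rw [pd_aux_step (hP (i + 1)) (f i), hf i]
      exact ih (i + 1) (by omega)
  refine ⟨len + 1, ?_⟩
  have h1 := (pd_aux_step (hP 0) g len).mpr (by rw [h0]; exact key len 0 (by omega))
  have e : LinearMap.range g ≃ₗ[R] M := LinearEquiv.ofTop _ (LinearMap.range_eq_top.mpr hg)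
  exact hasProjectiveDimensionLT_of_iso e.toModuleIso _

open CategoryTheory in
theorem pd_aux_fin {R M : Type} [Ring R] [AddCommGroup M] [Module R M]
    (h : HasFinProjDim R M) :
    ∃ n, HasProjectiveDimensionLT (ModuleCat.of R M) (n + 1) := by
  obtain ⟨len, ι, P, f, g, hP, hb, hg, h0, hf⟩ := h
  refine @pd_aux_res R M _ _ _ len (fun i => ↥(P i)) (fun i => inferInstance)
    (fun i => inferInstance) f g hP (fun i hi => ?_) hg h0 hf
  rw [hb i hi]
  infer_instance

open CategoryTheory in
theorem pd_aux_proj {R P : Type} [Ring R] [AddCommGroup P] [Module R P]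
    (hproj : Module.Projective R P) (d e : P →ₗ[R] P)
    (h1 : LinearMap.ker d = LinearMap.range e) (h2 : LinearMap.ker e = LinearMap.range d)
    (h : HasFinProjDim R (LinearMap.range e)) : Module.Projective R (LinearMap.range e) := by
  obtain ⟨n, hn⟩ := pd_aux_fin h
  rw [IsProjective.iff_projective, projective_iff_hasProjectiveDimensionLT_one]
  induction n with
  | zero => exact hn
  | succ n ih =>
    apply ih
    have a := (pd_aux_step hproj e n).mp hn
    rw [h2] at a
    have b := (pd_aux_step hproj d n).mp (hasProjectiveDimensionLT_of_ge _ (n + 1) _ (by omega))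
    rwa [h1] at b

theorem stmt_19 (N : ℕ) (hN : 2 ≤ N) (R : Type) [Ring R]
    -- every `R`-module has finite projective dimension:
    (hdim : ∀ (M : Type) (i₁ : AddCommGroup M) (i₂ : @Module R M _ i₁.toAddCommMonoid),
      @HasFinProjDim R _ M i₁ i₂)
    (P : Type) [AddCommGroup P] [Module R P] (hproj : Module.Projective R P)
    (d : P →ₗ[R] P) (hdN : d ^ N = 0)
    (hH : ∀ s : ℕ, 1 ≤ s → s ≤ N - 1 →
      LinearMap.ker (d ^ s) ≤ LinearMap.range (d ^ (N - s))) :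
    ∃ S : Submodule R P,
      Function.Bijective (fun v : Fin N → ↥S => ∑ i : Fin N, (d ^ (i : ℕ)) (v i : P)) := by
  have hpow : ∀ (a b : ℕ) (x : P), (d ^ a) ((d ^ b) x) = (d ^ (a + b)) x := by
    intro a b x
    rw [pow_add]; rfl
  have hz : ∀ (a : ℕ) (x : P), N ≤ a → (d ^ a) x = 0 := by
    intro a x ha
    rw [pow_eq_zero_of_le ha hdN]; rfl
  have h1 : LinearMap.ker d = LinearMap.range (d ^ (N - 1)) := by
    apply le_antisymm
    · simpa using hH 1 le_rfl (by omega)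
    · rintro _ ⟨x, rfl⟩
      have := hpow 1 (N - 1) x
      rw [hz (_ + _) _ (by omega), pow_one] at this
      exact this
  have h2 : LinearMap.ker (d ^ (N - 1)) = LinearMap.range d := by
    apply le_antisymm
    · have := hH (N - 1) (by omega) le_rfl
      rwa [show N - (N - 1) = 1 by omega, pow_one] at this
    · rintro _ ⟨x, rfl⟩
      have := hpow (N - 1) 1 x
      rw [hz (_ + _) _ (by omega), pow_one] at this
      exact this
  have hB := pd_aux_proj hproj d (d ^ (N - 1)) h1 h2 (hdim _ _ _)
  obtain ⟨s, hs⟩ := Module.projective_lifting_property (d ^ (N - 1)).rangeRestrict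
    LinearMap.id (d ^ (N - 1)).surjective_rangeRestrict
  have hs' : ∀ b, (d ^ (N - 1)) (s b) = b := fun b =>
    congrArg Subtype.val (LinearMap.congr_fun hs b)
  have hS0 : ∀ v : LinearMap.range s, (d ^ (N - 1)) (v : P) = 0 → v = 0 := by
    rintro ⟨_, b, rfl⟩ h
    have hb : b = 0 := by
      apply Subtype.ext
      rw [← hs' b]; exact h
    subst hb
    apply Subtype.ext
    simp
  let F : (Fin N → LinearMap.range s) →ₗ[R] P :=
    ∑ i : Fin N, (d ^ (i : ℕ)) ∘ₗ (LinearMap.range s).subtype ∘ₗ LinearMap.proj i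
  have hF : ∀ v, F v = ∑ i : Fin N, (d ^ (i : ℕ)) (v i : P) := by
    intro v
    simp [F, LinearMap.sum_apply]
  refine ⟨LinearMap.range s, ?_⟩
  have hFe : (fun v : Fin N → ↥(LinearMap.range s) =>
      ∑ i : Fin N, (d ^ (i : ℕ)) (v i : P)) = F := funext fun v => (hF v).symm
  rw [hFe]
  constructor
  · rw [injective_iff_map_eq_zero]
    intro v hv
    rw [hF] at hv
    have : ∀ (k : ℕ) (hk : k < N), v ⟨k, hk⟩ = 0 := by
      intro k
      induction k using Nat.strong_induction_on with
      | _ k ih =>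
        intro hk
        apply hS0
        have h3 := congrArg (d ^ (N - 1 - k)) hv
        rw [map_zero, map_sum, Finset.sum_eq_single ⟨k, hk⟩] at h3
        · rw [hpow, show N - 1 - k + k = N - 1 by omega] at h3
          exact h3
        · intro i _ hi
          have hne : (i : ℕ) ≠ k := fun h => hi (Fin.ext h)
          rcases lt_or_gt_of_ne hne with h | h
          · rw [ih i h i.2]; simp
          · rw [hpow]; exact hz _ _ (by omega)
        · simp
    funext i
    exact this i i.2
  · have : ∀ k, k ≤ N → ∀ x, (d ^ k) x = 0 → x ∈ LinearMap.range F := by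
      intro k
      induction k with
      | zero =>
        intro _ x hx
        have : x = 0 := by simpa using hx
        rw [this]; exact zero_mem _
      | succ k ih =>
        intro hk x hx
        have hm : (d ^ k) x ∈ LinearMap.range (d ^ (N - 1)) := by
          rw [← h1, LinearMap.mem_ker]
          have := hpow 1 k x
          rw [pow_one, add_comm, hx] at this
          exact this
        let b : LinearMap.range (d ^ (N - 1)) := ⟨_, hm⟩
        have hb : (d ^ (N - 1)) (s b) = (d ^ k) x := hs' b
        have hy : (d ^ (N - 1 - k)) (s b) ∈ LinearMap.range F := by
          refine ⟨Pi.single ⟨N - 1 - k, by omega⟩ ⟨s b, b, rfl⟩, ?_⟩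
          rw [hF, Finset.sum_eq_single ⟨N - 1 - k, by omega⟩]
          · simp
          · intro i _ hi
            rw [Pi.single_eq_of_ne hi]; simp
          · simp
        have := ih (by omega) (x - (d ^ (N - 1 - k)) (s b)) (by
          rw [map_sub, hpow, show k + (N - 1 - k) = N - 1 by omega, hb, sub_self])
        have := add_mem this hy
        rwa [sub_add_cancel] at this
    intro x
    exact this N le_rfl x (hz N x le_rfl)
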